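/- For K ≥ 2 and 0 < b < a < 1, if a - b² < (4/3)·ab, then ψ_{a,b,K} := 3a(a-1) + 3b(b-1)(K-1) + 4abK > 0; i.e., the condition (a - b²)/(ab) < 4/3 implies ASE > LSE uniformly in K for the K-block homogeneous balanced affinity SBM. -/

import Mathlib

/-!
Subtracting from `ψ` exactly `K` times the slack `q a b - p (a - b²)` of the hypothesis leaves
a remainder that factors as `p (a - b) (a + b + K - 1)`, so both summands have a visible sign.
-/

/-- The discriminating term `ψ_{a,b,K}` of the Chernoff ratio for the `K`-block homogeneous balanced
affinity stochastic block model with within-block probability `a` and between-block probability `b`.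
The numerical weights are left as parameters; the model has `p = 3` and `q = 4`. -/
def chernoffDiscriminant {R : Type*} [CommRing R] (p q a b K : R) : R :=
  p * a * (a - 1) + p * b * (b - 1) * (K - 1) + q * a * b * K

theorem chernoffDiscriminant_eq_add {R : Type*} [CommRing R] (p q a b K : R) :
    chernoffDiscriminant p q a b K =
      K * (q * (a * b) - p * (a - b ^ 2)) + p * ((a - b) * (a + b + K - 1)) := by
  unfold chernoffDiscriminant
  ring

theorem stmt_8_general {R : Type*} [CommRing R] [PartialOrder R] [IsStrictOrderedRing R]
    {p q a b K : R} (hp : 0 ≤ p) (hK : 0 < K) (hba : b ≤ a) (hsum : 1 ≤ a + b + K)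
    (h : p * (a - b ^ 2) < q * (a * b)) :
    0 < chernoffDiscriminant p q a b K := by
  have slack_pos : 0 < K * (q * (a * b) - p * (a - b ^ 2)) := mul_pos hK (sub_pos.2 h)
  have remainder_nonneg : 0 ≤ p * ((a - b) * (a + b + K - 1)) :=
    mul_nonneg hp (mul_nonneg (sub_nonneg.2 hba) (sub_nonneg.2 hsum))
  rw [chernoffDiscriminant_eq_add]
  exact add_pos_of_pos_of_nonneg slack_pos remainder_nonneg

theorem stmt_8 (K : ℕ) (hK : 2 ≤ K) (a b : ℝ) (hb : 0 < b) (hba : b < a) (ha : a < 1)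
    (h : a - b ^ 2 < 4 / 3 * (a * b)) :
    3 * a * (a - 1) + 3 * b * (b - 1) * (K - 1) + 4 * a * b * K > 0 := by
  have two_le_K : (2 : ℝ) ≤ K := mod_cast hK
  exact stmt_8_general (p := 3) (q := 4) (by norm_num) (by linarith) hba.le (by linarith)
    (by linarith)
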